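/- arXiv:1601.04908 — 9 statements merged into one kernel-verified Lean document; each statement's English description precedes it below -/
import Mathlib

section
/- Let A and B be positive semidefinite real n×n matrices. Then the range of A (as a linear map on ℝ^n via matrix-vector multiplication) is contained in the range of B if and only if there exists a real number k > 0 such that B - k•A is positive semidefinite. -/
open Matrix

/-!
If `G` is a generalized inverse of `B`, that is, `B * G * B = B`, then `B * G` fixes the range of
`B` pointwise. So if `range A ≤ range B` and both are Hermitian, `A = B * (G * A * Gᴴ) * B`.
Writing `B = Sᴴ * S`, this is a conjugate `Sᴴ * H * S` of a Hermitian matrix `H`. If `c > 0` is an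
upper bound for the eigenvalues of `H`, then `A ≤ c • (Sᴴ * S) = c • B`.

Conversely, `B = k • A + (B - k • A)` is a sum of positive semidefinite matrices, so its quadratic
form vanishes only where that of `A` does. This gives `ker B ≤ ker A`, which for Hermitian matrices
is dual to the inclusion of ranges.
-/

lemma range_mulVecLin_le_range_smul {m n K R : Type*} [Fintype n] [Semifield K] [CommSemiring R]
    [Algebra K R] {k : K} (hk : k ≠ 0) (A : Matrix m n R) :
    LinearMap.range A.mulVecLin ≤ LinearMap.range (k • A).mulVecLin := by
  rintro _ ⟨x, rfl⟩
  exact ⟨k⁻¹ • x, by simp [smul_smul, hk]⟩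

section GeneralizedInverse

lemma exists_comp_comp_self_eq {K V W : Type*} [DivisionRing K] [AddCommGroup V] [Module K V]
    [AddCommGroup W] [Module K W] (f : V →ₗ[K] W) : ∃ g : W →ₗ[K] V, f ∘ₗ g ∘ₗ f = f := by
  obtain ⟨s, hs⟩ := f.rangeRestrict.exists_rightInverse_of_surjective f.range_rangeRestrict
  obtain ⟨g, rfl⟩ := LinearMap.exists_extend s
  exact ⟨g, LinearMap.ext fun x ↦ congrArg Subtype.val (LinearMap.congr_fun hs (f.rangeRestrict x))⟩

variable {m n : Type*} [Fintype m] [Fintype n]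

lemma exists_mul_mul_self_eq {K : Type*} [Field K] (B : Matrix m n K) :
    ∃ G : Matrix n m K, B * G * B = B := by
  classical
  obtain ⟨g, hg⟩ := exists_comp_comp_self_eq B.mulVecLin
  refine ⟨LinearMap.toMatrix' g, ext_of_mulVec_single fun j ↦ ?_⟩
  rw [← mulVec_mulVec, ← mulVec_mulVec, LinearMap.toMatrix'_mulVec]
  exact LinearMap.congr_fun hg (Pi.single j 1)

lemma mul_mul_eq_self_of_range_le {p R : Type*} [Fintype p] [CommSemiring R] {A : Matrix m p R}
    {B : Matrix m n R} {G : Matrix n m R} (hG : B * G * B = B)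
    (h : LinearMap.range A.mulVecLin ≤ LinearMap.range B.mulVecLin) : B * G * A = A := by
  classical
  refine ext_of_mulVec_single fun j ↦ ?_
  obtain ⟨w, hw : B *ᵥ w = A *ᵥ Pi.single j 1⟩ := h ⟨Pi.single j 1, rfl⟩
  rw [← mulVec_mulVec, ← hw, mulVec_mulVec, hG]

lemma mul_mul_eq_self_of_ker_le {p R : Type*} [CommRing R] {A : Matrix p n R}
    {B : Matrix m n R} {G : Matrix n m R} (hG : B * G * B = B)
    (h : LinearMap.ker B.mulVecLin ≤ LinearMap.ker A.mulVecLin) : A * G * B = A := by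
  classical
  refine ext_of_mulVec_single fun j ↦ ?_
  set x : n → R := Pi.single j 1
  have hx : B *ᵥ ((G * B) *ᵥ x - x) = 0 := by
    rw [mulVec_sub, mulVec_mulVec, ← Matrix.mul_assoc, hG, sub_self]
  have hAx : A *ᵥ ((G * B) *ᵥ x - x) = 0 := h hx
  rwa [mulVec_sub, mulVec_mulVec, ← Matrix.mul_assoc, sub_eq_zero] at hAx

end GeneralizedInverse

section Hermitian

variable {n K : Type*} [Fintype n] [Field K] [StarRing K] {A B : Matrix n n K}

lemma exists_isHermitian_eq_mul_mul_of_range_le (hA : A.IsHermitian) (hB : B.IsHermitian)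
    (h : LinearMap.range A.mulVecLin ≤ LinearMap.range B.mulVecLin) :
    ∃ C : Matrix n n K, C.IsHermitian ∧ A = B * C * B := by
  obtain ⟨G, hG⟩ := exists_mul_mul_self_eq B
  have hBGA : B * G * A = A := mul_mul_eq_self_of_range_le hG h
  have hAGB : A * Gᴴ * B = A := by
    simpa [hA.eq, hB.eq, Matrix.mul_assoc] using congrArg conjTranspose hBGA
  refine ⟨G * A * Gᴴ, isHermitian_mul_mul_conjTranspose G hA, ?_⟩
  calc A = B * G * (A * Gᴴ * B) := by rw [hAGB, hBGA]
    _ = B * (G * A * Gᴴ) * B := by simp only [Matrix.mul_assoc]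

lemma range_mulVecLin_le_of_ker_le (hA : A.IsHermitian) (hB : B.IsHermitian)
    (h : LinearMap.ker B.mulVecLin ≤ LinearMap.ker A.mulVecLin) :
    LinearMap.range A.mulVecLin ≤ LinearMap.range B.mulVecLin := by
  obtain ⟨G, hG⟩ := exists_mul_mul_self_eq B
  have hBA : B * (A * G)ᴴ = A := by
    simpa [hA.eq, hB.eq] using congrArg conjTranspose (mul_mul_eq_self_of_ker_le hG h)
  rw [← hBA, mulVecLin_mul]
  exact LinearMap.range_comp_le_range _ _

end Hermitian

section PosSemidef

open scoped ComplexOrder MatrixOrder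

lemma exists_pos_posSemidef_smul_one_sub {n 𝕜 : Type*} [Finite n] [DecidableEq n] [RCLike 𝕜]
    {A : Matrix n n 𝕜} (hA : A.IsHermitian) :
    ∃ c : ℝ, 0 < c ∧ (c • (1 : Matrix n n 𝕜) - A).PosSemidef := by
  cases nonempty_fintype n
  obtain ⟨c, hc, hspec⟩ := A.finite_real_spectrum.bddAbove.exists_ge 1
  refine ⟨c, one_pos.trans_le hc, ?_⟩
  rw [← Algebra.algebraMap_eq_smul_one, ← le_iff]
  exact le_algebraMap_of_spectrum_le hspec hA.isSelfAdjoint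

variable {n 𝕜 : Type*} [Fintype n] [RCLike 𝕜] {A B : Matrix n n 𝕜}

lemma exists_pos_posSemidef_smul_sub_mul_mul {C : Matrix n n 𝕜} (hB : B.PosSemidef)
    (hC : C.IsHermitian) : ∃ c : ℝ, 0 < c ∧ (c • B - B * C * B).PosSemidef := by
  classical
  obtain ⟨S, rfl⟩ : ∃ S, B = Sᴴ * S := CStarAlgebra.nonneg_iff_eq_star_mul_self.mp hB.nonneg
  obtain ⟨c, hc, hcH⟩ :=
    exists_pos_posSemidef_smul_one_sub (isHermitian_mul_mul_conjTranspose S hC)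
  refine ⟨c, hc, ?_⟩
  simpa [Matrix.mul_sub, Matrix.sub_mul, Matrix.mul_assoc] using hcH.conjTranspose_mul_mul_same S

lemma exists_pos_posSemidef_sub_smul_of_range_le (hA : A.IsHermitian) (hB : B.PosSemidef)
    (h : LinearMap.range A.mulVecLin ≤ LinearMap.range B.mulVecLin) :
    ∃ k : ℝ, 0 < k ∧ (B - k • A).PosSemidef := by
  obtain ⟨C, hC, rfl⟩ := exists_isHermitian_eq_mul_mul_of_range_le hA hB.isHermitian h
  obtain ⟨c, hc, hcB⟩ := exists_pos_posSemidef_smul_sub_mul_mul hB hC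
  refine ⟨c⁻¹, inv_pos.mpr hc, ?_⟩
  simpa [smul_sub, smul_smul, hc.ne'] using hcB.smul (inv_nonneg.mpr hc.le)

lemma ker_mulVecLin_add_le_left (hA : A.PosSemidef) (hB : B.PosSemidef) :
    LinearMap.ker (A + B).mulVecLin ≤ LinearMap.ker A.mulVecLin := by
  intro x hx
  have hsum : star x ⬝ᵥ A *ᵥ x + star x ⬝ᵥ B *ᵥ x = 0 := by
    rw [← dotProduct_add, ← add_mulVec, show (A + B) *ᵥ x = 0 from hx, dotProduct_zero]
  have hAx : star x ⬝ᵥ A *ᵥ x = 0 :=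
    ((add_eq_zero_iff_of_nonneg (hA.dotProduct_mulVec_nonneg x)
      (hB.dotProduct_mulVec_nonneg x)).mp hsum).1
  exact (hA.dotProduct_mulVec_zero_iff x).mp hAx

lemma range_mulVecLin_le_range_add (hA : A.PosSemidef) (hB : B.PosSemidef) :
    LinearMap.range A.mulVecLin ≤ LinearMap.range (A + B).mulVecLin :=
  range_mulVecLin_le_of_ker_le hA.isHermitian (hA.add hB).isHermitian
    (ker_mulVecLin_add_le_left hA hB)

theorem range_subset_iff_exists_khyponym_general (hA : A.PosSemidef) (hB : B.PosSemidef) :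
    LinearMap.range A.mulVecLin ≤ LinearMap.range B.mulVecLin ↔
      ∃ k : ℝ, 0 < k ∧ (B - k • A).PosSemidef := by
  refine ⟨exists_pos_posSemidef_sub_smul_of_range_le hA.isHermitian hB, ?_⟩
  rintro ⟨k, hk, hBA⟩
  calc LinearMap.range A.mulVecLin
    _ ≤ LinearMap.range (k • A).mulVecLin := range_mulVecLin_le_range_smul hk.ne' A
    _ ≤ LinearMap.range (k • A + (B - k • A)).mulVecLin :=
      range_mulVecLin_le_range_add (hA.smul hk.le) hBA
    _ = LinearMap.range B.mulVecLin := by rw [add_sub_cancel]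

end PosSemidef

/-- For positive semidefinite real `n × n` matrices `A` and `B`,
the range of `A` (as a linear map on `ℝ^n`) is contained in the range of `B`
iff there is `k > 0` with `B - k • A` positive semidefinite. -/
theorem range_subset_iff_exists_khyponym {n : ℕ} (A B : Matrix (Fin n) (Fin n) ℝ)
    (hA : A.PosSemidef) (hB : B.PosSemidef) :
    LinearMap.range A.mulVecLin ≤ LinearMap.range B.mulVecLin ↔
      ∃ k : ℝ, 0 < k ∧ (B - k • A).PosSemidef :=
  range_subset_iff_exists_khyponym_general hA hB
end

section
/- Let A and B be positive semidefinite real n×n matrices. Then every eigenvalue of the product matrix B * A is a nonnegative real number; that is, the spectrum of B * A (viewed over ℂ) is contained in the nonnegative reals. -/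
open Matrix

/-! Write the positive factor `B` as `star C * C`. Up to the point `0`, the spectrum of
`star C * (C * A)` is that of `(C * A) * star C`, and the latter element is a conjugate of `A`,
hence positive. -/

section StarOrderedRing

variable {R E : Type*} [CommRing R] [PartialOrder R]
  [NonUnitalRing E] [StarRing E] [PartialOrder E] [StarOrderedRing E]
  [Module R E] [IsScalarTower R E E] [SMulCommClass R E E] [NonnegSpectrumClass R E]

theorem nonneg_of_mem_quasispectrum_star_mul_self_mul {a : E} (ha : 0 ≤ a) (c : E) {r : R}
    (hr : r ∈ quasispectrum R (star c * c * a)) : 0 ≤ r := by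
  have hr' : r ∈ quasispectrum R (c * a * star c) := by
    rwa [mul_assoc, quasispectrum.mul_comm] at hr
  exact quasispectrum_nonneg_of_nonneg _ (star_right_conjugate_nonneg ha c) r hr'

theorem nonneg_of_mem_quasispectrum_mul_of_nonneg
    [TopologicalSpace E] [IsTopologicalRing E] [T2Space E]
    [Module ℝ E] [IsScalarTower ℝ E E] [SMulCommClass ℝ E E] [NonnegSpectrumClass ℝ E]
    [NonUnitalContinuousFunctionalCalculus ℝ E IsSelfAdjoint]
    {a b : E} (ha : 0 ≤ a) (hb : 0 ≤ b) {r : R} (hr : r ∈ quasispectrum R (b * a)) : 0 ≤ r := by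
  obtain ⟨c, rfl⟩ := CStarAlgebra.nonneg_iff_eq_star_mul_self.mp hb
  exact nonneg_of_mem_quasispectrum_star_mul_self_mul ha c hr

end StarOrderedRing

section Matrix

open scoped ComplexOrder MatrixOrder

variable {n 𝕜 : Type*} [RCLike 𝕜]

theorem posSemidef_map_of_semiconj_star [Finite n] {S F : Type*} [Ring S] [PartialOrder S]
    [StarRing S] [StarOrderedRing S] [FunLike F 𝕜 S] [NonUnitalRingHomClass F 𝕜 S]
    {A : Matrix n n 𝕜} (hA : A.PosSemidef) (f : F) (hf : Function.Semiconj f star star) :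
    (A.map f).PosSemidef := by
  classical
  have := Fintype.ofFinite n
  obtain ⟨D, rfl⟩ := CStarAlgebra.nonneg_iff_eq_star_mul_self.mp hA.nonneg
  rw [star_eq_conjTranspose, Matrix.map_mul, conjTranspose_map f hf]
  exact posSemidef_conjTranspose_mul_self (D.map f)

theorem posSemidef_map_algebraMap [Finite n] {A : Matrix n n ℝ} (hA : A.PosSemidef) :
    (A.map (algebraMap ℝ 𝕜)).PosSemidef :=
  posSemidef_map_of_semiconj_star hA (algebraMap ℝ 𝕜) algebraMap_star_comm

instance nonnegSpectrumClass_matrix [Fintype n] : NonnegSpectrumClass 𝕜 (Matrix n n 𝕜) where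
  quasispectrum_nonneg_of_nonneg A hA x hx := by
    classical
    rw [quasispectrum_eq_spectrum_union_zero] at hx
    rcases hx with hx | rfl
    · exact (posSemidef_iff_isHermitian_and_spectrum_nonneg.mp hA.posSemidef).2 hx
    · exact le_rfl

theorem spectrum_mul_posSemidef_nonneg_real_general [Fintype n] [DecidableEq n]
    {A B : Matrix n n 𝕜} (hA : A.PosSemidef) (hB : B.PosSemidef) {μ : 𝕜}
    (hμ : μ ∈ spectrum 𝕜 (B * A)) : 0 ≤ μ :=
  nonneg_of_mem_quasispectrum_mul_of_nonneg hA.nonneg hB.nonneg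
    (spectrum_subset_quasispectrum 𝕜 _ hμ)

end Matrix

/-- For positive semidefinite real `n × n` matrices `A` and `B`,
every complex eigenvalue of the product `B * A` is a nonnegative real number. -/
theorem spectrum_mul_posSemidef_nonneg_real {n : ℕ} (A B : Matrix (Fin n) (Fin n) ℝ)
    (hA : A.PosSemidef) (hB : B.PosSemidef) :
    ∀ μ ∈ spectrum ℂ ((B * A).map (algebraMap ℝ ℂ)), ∃ r : ℝ, 0 ≤ r ∧ μ = (r : ℂ) := by
  intro μ hμ
  rw [Matrix.map_mul] at hμ
  obtain ⟨r, hr, rfl⟩ := RCLike.nonneg_iff_exists_ofReal.mp <|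
    spectrum_mul_posSemidef_nonneg_real_general (posSemidef_map_algebraMap hA)
      (posSemidef_map_algebraMap hB) hμ
  exact ⟨r, hr, rfl⟩
end

section
/- Let A and B be positive semidefinite real n×n matrices with A ≠ 0 and with the range of A (as a linear map via matrix-vector multiplication) contained in the range of B. Then the set {k ∈ ℝ | B - k•A is positive semidefinite} has a greatest element, and this greatest element equals the infimum, over all x ∈ ℝ^n with xᵀ A x > 0, of the ratios (xᵀ B x)/(xᵀ A x). -/
open Matrix

/-!
Positive semidefiniteness of `B - k • A` says that the form of `B` dominates `k` times the form
of `A` at every vector. Where the form of `A` is positive, this bounds `k` above by the Rayleigh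
ratio; elsewhere it becomes weaker as `k` grows, so it is inherited from any smaller admissible
`k₀`. Hence a number `k ≥ k₀` is admissible exactly when it is a lower bound of the ratios, and
their infimum is itself admissible. If `B` is positive semidefinite, one can take `k₀ = 0`.
-/

section Ratio

variable {X K : Type*} [Field K]

theorem forall_mul_le_of_le_div [LinearOrder K] [IsStrictOrderedRing K] {f g : X → K} {k₀ k : K}
    (hk₀ : ∀ x, k₀ * f x ≤ g x) (hle : k₀ ≤ k) (hk : ∀ x, 0 < f x → k ≤ g x / f x) (x : X) :
    k * f x ≤ g x := by
  rcases lt_or_ge 0 (f x) with hpos | hnonpos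
  · exact (le_div_iff₀ hpos).1 (hk x hpos)
  · exact (mul_le_mul_of_nonpos_right hle hnonpos).trans (hk₀ x)

theorem isGreatest_sInf_div [ConditionallyCompleteLinearOrder K] [IsStrictOrderedRing K]
    {f g : X → K} (hpos : ∃ x, 0 < f x) (hne : ∃ k₀, ∀ x, k₀ * f x ≤ g x) :
    IsGreatest {k | ∀ x, k * f x ≤ g x} (sInf {r | ∃ x, 0 < f x ∧ r = g x / f x}) := by
  set ratios := {r | ∃ x, 0 < f x ∧ r = g x / f x}
  have mem_lowerBounds {k : K} (hk : ∀ x, k * f x ≤ g x) : k ∈ lowerBounds ratios := by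
    rintro _ ⟨x, hx, rfl⟩
    exact (le_div_iff₀ hx).2 (hk x)
  obtain ⟨k₀, hk₀⟩ := hne
  have isGLB_sInf : IsGLB ratios (sInf ratios) :=
    isGLB_csInf (hpos.elim fun x hx ↦ ⟨_, x, hx, rfl⟩) ⟨k₀, mem_lowerBounds hk₀⟩
  refine ⟨?_, fun k hk ↦ isGLB_sInf.2 (mem_lowerBounds hk)⟩
  have hle : k₀ ≤ sInf ratios := isGLB_sInf.2 (mem_lowerBounds hk₀)
  exact forall_mul_le_of_le_div hk₀ hle fun x hx ↦ isGLB_sInf.1 ⟨x, hx, rfl⟩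

end Ratio

section QuadraticForm

open RCLike
open scoped ComplexOrder

variable {n 𝕜 : Type*} [Fintype n] [RCLike 𝕜] {A B : Matrix n n 𝕜}

theorem posSemidef_iff_re_dotProduct_nonneg :
    A.PosSemidef ↔ A.IsHermitian ∧ ∀ x, 0 ≤ re (star x ⬝ᵥ A *ᵥ x) := by
  rw [posSemidef_iff_dotProduct_mulVec]
  refine and_congr_right fun hA ↦ forall_congr' fun x ↦ ?_
  rw [RCLike.nonneg_iff, hA.im_star_dotProduct_mulVec_self, and_iff_left rfl]

theorem posSemidef_sub_smul_iff (hA : A.IsHermitian) (hB : B.IsHermitian) {k : ℝ} :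
    (B - k • A).PosSemidef ↔ ∀ x, k * re (star x ⬝ᵥ A *ᵥ x) ≤ re (star x ⬝ᵥ B *ᵥ x) := by
  have hBA : (B - k • A).IsHermitian := hB.sub (hA.smul (.all k))
  simp [posSemidef_iff_re_dotProduct_nonneg, hBA, sub_mulVec, smul_mulVec, dotProduct_sub,
    dotProduct_smul, smul_re]

theorem exists_re_dotProduct_mulVec_pos (hA : A.PosSemidef) (hA0 : A ≠ 0) :
    ∃ x, 0 < re (star x ⬝ᵥ A *ᵥ x) := by
  contrapose! hA0 with hnonpos
  refine ext_iff_mulVec.2 fun x ↦ ?_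
  rw [zero_mulVec, ← hA.dotProduct_mulVec_zero_iff]
  exact RCLike.ext (by simpa using (hnonpos x).antisymm (hA.re_dotProduct_nonneg x))
    (by simpa using hA.isHermitian.im_star_dotProduct_mulVec_self x)

theorem kmax_eq_inf_rayleigh_general (hA : A.IsHermitian)
    (hpos : ∃ x, 0 < re (star x ⬝ᵥ A *ᵥ x)) (hne : ∃ k₀ : ℝ, (B - k₀ • A).PosSemidef) :
    IsGreatest {k : ℝ | (B - k • A).PosSemidef}
      (sInf {r : ℝ | ∃ x, 0 < re (star x ⬝ᵥ A *ᵥ x) ∧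
        r = re (star x ⬝ᵥ B *ᵥ x) / re (star x ⬝ᵥ A *ᵥ x)}) := by
  have hB : B.IsHermitian := by
    obtain ⟨k₀, hk₀⟩ := hne
    simpa using hk₀.isHermitian.add (hA.smul (.all k₀))
  simp only [posSemidef_sub_smul_iff hA hB] at hne ⊢
  exact isGreatest_sInf_div hpos hne

end QuadraticForm

/-- For positive semidefinite real `n × n` matrices `A ≠ 0` and `B` with
`range A ⊆ range B`, the set `{k | B - k • A is PSD}` has a greatest element, which equals
the infimum over all `x` with `xᵀ A x > 0` of the ratios `(xᵀ B x) / (xᵀ A x)`. -/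
theorem kmax_eq_inf_rayleigh {n : ℕ} (A B : Matrix (Fin n) (Fin n) ℝ)
    (hA : A.PosSemidef) (hB : B.PosSemidef) (hA0 : A ≠ 0)
    (hrange : LinearMap.range A.mulVecLin ≤ LinearMap.range B.mulVecLin) :
    IsGreatest {k : ℝ | (B - k • A).PosSemidef}
      (sInf {r : ℝ | ∃ x : Fin n → ℝ,
        0 < x ⬝ᵥ A.mulVec x ∧ r = (x ⬝ᵥ B.mulVec x) / (x ⬝ᵥ A.mulVec x)}) := by
  simpa using kmax_eq_inf_rayleigh_general hA.isHermitian
    (exists_re_dotProduct_mulVec_pos hA hA0) ⟨0, by simpa using hB⟩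
end

section
/- Let A and B be positive semidefinite real n×n matrices with A ≠ 0. If there exists some k > 0 such that B - k•A is positive semidefinite, then the set {k ∈ ℝ | k > 0 and B - k•A is positive semidefinite} has a greatest element. -/
open Matrix

/-!
In an ordered topological module with closed order, `k • a ≤ b` is a closed condition on `k : ℝ`.
If it held for arbitrarily large `k`, then `a ≤ k⁻¹ • b` would hold along a sequence with
`k⁻¹ • b → 0`, forcing `a ≤ 0`. So when `a ≰ 0` the admissible `k` form a closed set bounded above,
which contains its supremum. The theorem is the case of the Loewner order, which is closed because
positive semidefiniteness is defined by equations and weak inequalities continuous in the entries.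
-/

open Filter Topology

section OrderedModule

variable {E : Type*} [AddCommMonoid E] [Module ℝ E] [Preorder E] [TopologicalSpace E]
  [ContinuousSMul ℝ E] {a b : E}

theorem isClosed_setOf_smul_le [ClosedIicTopology E] (a b : E) :
    IsClosed {k : ℝ | k • a ≤ b} :=
  isClosed_Iic.preimage (continuous_id.smul continuous_const)

theorem nonpos_of_frequently_smul_le [PosSMulMono ℝ E] [ClosedIciTopology E]
    (h : ∃ᶠ k : ℝ in atTop, k • a ≤ b) : a ≤ 0 := by
  have hlim : Tendsto (fun k : ℝ ↦ k⁻¹ • b) atTop (𝓝 0) := by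
    simpa only [zero_smul] using (tendsto_inv_atTop_zero (𝕜 := ℝ)).smul_const b
  have hle : ∃ᶠ k : ℝ in atTop, a ≤ k⁻¹ • b :=
    (h.and_eventually (eventually_gt_atTop 0)).mono fun k ⟨hk, hk0⟩ ↦ by
      simpa only [inv_smul_smul₀ hk0.ne'] using
        smul_le_smul_of_nonneg_left hk (inv_nonneg.2 hk0.le)
  exact ge_of_tendsto_of_frequently hlim hle

theorem bddAbove_setOf_smul_le [PosSMulMono ℝ E] [ClosedIciTopology E] (ha : ¬a ≤ 0) (b : E) :
    BddAbove {k : ℝ | k • a ≤ b} := by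
  by_contra hunbdd
  refine ha (nonpos_of_frequently_smul_le (b := b) (frequently_atTop.2 fun c ↦ ?_))
  obtain ⟨k, hk, hck⟩ := not_bddAbove_iff.1 hunbdd c
  exact ⟨k, hck.le, hk⟩

theorem exists_isGreatest_setOf_smul_le [PosSMulMono ℝ E] [OrderClosedTopology E]
    (ha : ¬a ≤ 0) (h : ∃ k : ℝ, k • a ≤ b) : ∃ g, IsGreatest {k : ℝ | k • a ≤ b} g :=
  ⟨_, (isClosed_setOf_smul_le a b).isGreatest_csSup h (bddAbove_setOf_smul_le ha b)⟩

end OrderedModule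

theorem isClosed_setOf_posSemidef {ι R : Type*} [Ring R] [PartialOrder R] [StarRing R]
    [TopologicalSpace R] [IsTopologicalSemiring R] [ContinuousStar R] [OrderClosedTopology R] :
    IsClosed {M : Matrix ι ι R | M.PosSemidef} := by
  have hherm : IsClosed {M : Matrix ι ι R | M.IsHermitian} :=
    isClosed_eq continuous_id.matrix_conjTranspose continuous_id
  have hform (x : ι →₀ R) : IsClosed {M : Matrix ι ι R |
      0 ≤ x.sum fun i xi ↦ x.sum fun j xj ↦ star xi * M i j * xj} := by
    refine isClosed_le continuous_const ?_
    unfold Finsupp.sum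
    fun_prop
  simpa only [Matrix.PosSemidef, Set.ofPred_and, Set.ofPred_forall] using
    hherm.inter (isClosed_iInter hform)

section Loewner

open scoped ComplexOrder MatrixOrder

variable {ι 𝕜 : Type*} [RCLike 𝕜] {A B : Matrix ι ι 𝕜}

instance orderClosedTopology_matrix : OrderClosedTopology (Matrix ι ι 𝕜) where
  isClosed_le' := isClosed_setOf_posSemidef.preimage (continuous_snd.sub continuous_fst)

instance posSMulMono_matrix : PosSMulMono ℝ (Matrix ι ι 𝕜) where
  smul_le_smul_of_nonneg_left k hk M N hMN := by
    rw [Matrix.le_iff, ← smul_sub]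
    exact (Matrix.le_iff.1 hMN).smul hk

theorem not_posSemidef_neg_of_ne_zero (hA : A.PosSemidef) (hA0 : A ≠ 0) : ¬(-A).PosSemidef :=
  fun hneg ↦ hA0 (le_antisymm (neg_nonneg.1 hneg.nonneg) hA.nonneg)

theorem exists_kmax_general (hA : ¬(-A).PosSemidef)
    (h : ∃ k : ℝ, 0 < k ∧ (B - k • A).PosSemidef) :
    ∃ g : ℝ, IsGreatest {k : ℝ | 0 < k ∧ (B - k • A).PosSemidef} g := by
  obtain ⟨k, hk0, hk⟩ := h
  have hA' : ¬A ≤ 0 := fun hle ↦ hA (neg_nonneg.2 hle).posSemidef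
  obtain ⟨g, hg, hub⟩ := exists_isGreatest_setOf_smul_le hA' ⟨k, Matrix.le_iff.2 hk⟩
  exact ⟨g, ⟨hk0.trans_le (hub hk), hg⟩, fun _ hl ↦ hub hl.2⟩

end Loewner

/-- For positive semidefinite real `n × n` matrices `A ≠ 0` and `B`, if some
`k > 0` satisfies `B - k • A` PSD, then `{k | k > 0 ∧ B - k • A is PSD}` has a greatest
element. -/
theorem exists_kmax {n : ℕ} (A B : Matrix (Fin n) (Fin n) ℝ)
    (hA : A.PosSemidef) (hB : B.PosSemidef) (hA0 : A ≠ 0)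
    (h : ∃ k : ℝ, 0 < k ∧ (B - k • A).PosSemidef) :
    ∃ g : ℝ, IsGreatest {k : ℝ | 0 < k ∧ (B - k • A).PosSemidef} g :=
  exists_kmax_general (not_posSemidef_neg_of_ne_zero hA hA0) h
end

section
/- Let A, B, C be positive semidefinite real n×n matrices. Suppose k_max is the greatest element of {k ∈ ℝ | k > 0 and B - k•A is positive semidefinite}, l_max is the greatest element of {l ∈ ℝ | l > 0 and C - l•B is positive semidefinite}, and m_max is the greatest element of {m ∈ ℝ | m > 0 and C - m•A is positive semidefinite}. Then m_max ≥ k_max * l_max. -/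
open Matrix

section Hyponymy

variable {ι α R : Type*} [CommSemiring α] [PartialOrder α] [StarRing α] [StarOrderedRing α]
  [Ring R] [PartialOrder R] [StarRing R] [Algebra α R]
  {A B C : Matrix ι ι R} {k l m : α}

/-- Graded hyponymy `A ⊑_k B`: the matrix `A`, scaled by `k`, lies below `B` in the Loewner order.
It is spelled out through `Matrix.PosSemidef` because the order instance on matrices is scoped and
restricted to `RCLike` entries. -/
def IsHyponym (k : α) (A B : Matrix ι ι R) : Prop :=
  (B - k • A).PosSemidef

theorem IsHyponym.trans [AddLeftMono R] [StarModule α R] [PosSMulMono α R]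
    (hAB : IsHyponym k A B) (hBC : IsHyponym l B C) (hl : 0 ≤ l) : IsHyponym (k * l) A C := by
  have sub_smul_eq_add : C - (k * l) • A = (C - l • B) + l • (B - k • A) := by
    rw [smul_sub, smul_smul, mul_comm l k, sub_add_sub_cancel]
  rw [IsHyponym, sub_smul_eq_add]
  exact hBC.add (hAB.smul hl)

theorem kmax_mul_le_general [PosMulStrictMono α] [AddLeftMono R] [StarModule α R] [PosSMulMono α R]
    (hk : 0 < k) (hAB : IsHyponym k A B) (hl : 0 < l) (hBC : IsHyponym l B C)
    (hm : m ∈ upperBounds {r : α | 0 < r ∧ IsHyponym r A C}) : k * l ≤ m :=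
  hm ⟨mul_pos hk hl, hAB.trans hBC hl.le⟩

end Hyponymy

/-- For positive semidefinite `A`, `B`, `C`, if `k_max`, `l_max`, `m_max` are
the greatest elements of the sets of positive `k` with `B - k • A` PSD, `C - l • B` PSD,
and `C - m • A` PSD respectively, then `m_max ≥ k_max * l_max`. -/
theorem kmax_mul_le {n : ℕ} (A B C : Matrix (Fin n) (Fin n) ℝ)
    (hA : A.PosSemidef) (hB : B.PosSemidef) (hC : C.PosSemidef)
    (kmax lmax mmax : ℝ)
    (hk : IsGreatest {k : ℝ | 0 < k ∧ (B - k • A).PosSemidef} kmax)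
    (hl : IsGreatest {l : ℝ | 0 < l ∧ (C - l • B).PosSemidef} lmax)
    (hm : IsGreatest {m : ℝ | 0 < m ∧ (C - m • A).PosSemidef} mmax) :
    mmax ≥ kmax * lmax :=
  kmax_mul_le_general hk.1.1 hk.1.2 hl.1.1 hl.1.2 hm.2
end

section
/- Let B be a positive definite real n×n matrix, A a nonzero positive semidefinite real n×n matrix, ρ a positive semidefinite real n×n matrix with trace 1, and δ > 0. Let k be the greatest element of {k ∈ ℝ | B - k•A is positive semidefinite} and k' the greatest element of {k ∈ ℝ | B - k•(A + δ•ρ) is positive semidefinite}. Then 0 < k' ≤ k and k - k' ≤ δ * μ * k * k', where μ is the largest eigenvalue of B⁻¹. -/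
open Matrix

/-! In an ordered real vector space, suppose `0 ≤ d ≤ c • b`. From `k • a ≤ b` one gets
`k • (a + d) ≤ (1 + c * k) • b`, so the greatest `k'` with `k' • (a + d) ≤ b` is at least
`k / (1 + c * k)`, that is `k - k' ≤ c * k * k'`. For the Loewner order, with `b = B` positive
definite and `d = D` positive semidefinite, one may take `c = tr D * μ` where `μ` is the largest
eigenvalue of `B⁻¹`, because `D ≤ tr D • 1` and `1 ≤ μ • B`. -/

section OrderedModule

variable {𝕜 E : Type*} [Field 𝕜] [LinearOrder 𝕜] [IsStrictOrderedRing 𝕜]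
  [AddCommGroup E] [PartialOrder E] [Module 𝕜 E] [PosSMulMono 𝕜 E]
  {a b d : E} {c k k' : 𝕜}

theorem pos_of_mem_upperBounds_smul_le [SMulPosMono 𝕜 E] (hb : 0 ≤ b) (hc : 0 ≤ c) (ha : a ≤ c • b)
    (hk : k ∈ upperBounds {r : 𝕜 | r • a ≤ b}) : 0 < k := by
  have hc' : 0 < c + 1 := by positivity
  have hmem : (c + 1)⁻¹ • a ≤ b := by
    rw [inv_smul_le_iff_of_pos hc']
    exact ha.trans (smul_le_smul_of_nonneg_right (by simp) hb)
  exact (inv_pos.2 hc').trans_le (hk hmem)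

variable [IsOrderedAddMonoid E]

theorem div_smul_add_le (hc : 0 ≤ c) (hk₀ : 0 ≤ k) (hk : k • a ≤ b) (hd : d ≤ c • b) :
    (k / (1 + c * k)) • (a + d) ≤ b := by
  have hpos : 0 < 1 + c * k := by positivity
  rw [div_eq_inv_mul, mul_smul, inv_smul_le_iff_of_pos hpos]
  calc k • (a + d) = k • a + k • d := smul_add k a d
    _ ≤ b + k • c • b := by gcongr
    _ = (1 + c * k) • b := by module

theorem isGreatest_smul_le_add_bounds (hc : 0 ≤ c) (hd : 0 ≤ d) (hdb : d ≤ c • b) (hk₀ : 0 < k)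
    (hk : IsGreatest {r : 𝕜 | r • a ≤ b} k) (hk' : IsGreatest {r : 𝕜 | r • (a + d) ≤ b} k') :
    0 < k' ∧ k' ≤ k ∧ k - k' ≤ c * k * k' := by
  have hpos : 0 < 1 + c * k := by positivity
  have hlower : k / (1 + c * k) ≤ k' := hk'.2 (div_smul_add_le hc hk₀.le hk.1 hdb)
  have hk'₀ : 0 < k' := (div_pos hk₀ hpos).trans_le hlower
  refine ⟨hk'₀, hk.2 ?_, ?_⟩
  · exact (smul_le_smul_of_nonneg_left (le_add_of_nonneg_right hd) hk'₀.le).trans hk'.1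
  · rw [div_le_iff₀ hpos] at hlower
    linarith

end OrderedModule

section Loewner

open scoped ComplexOrder MatrixOrder

variable {𝕜 n : Type*} [RCLike 𝕜] [Fintype n] [DecidableEq n] {A B D : Matrix n n 𝕜} {c : ℝ}

theorem le_smul_one_of_eigenvalues_le (hA : A.IsHermitian) (h : ∀ i, hA.eigenvalues i ≤ c) :
    A ≤ c • (1 : Matrix n n 𝕜) := by
  rw [← Algebra.algebraMap_eq_smul_one]
  refine le_algebraMap_of_spectrum_le (fun x hx => ?_) hA.isSelfAdjoint
  rw [hA.spectrum_real_eq_range_eigenvalues] at hx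
  obtain ⟨i, rfl⟩ := hx
  exact h i

theorem le_iSup_eigenvalues_smul_one (hA : A.IsHermitian) :
    A ≤ (⨆ i, hA.eigenvalues i) • (1 : Matrix n n 𝕜) :=
  le_smul_one_of_eigenvalues_le hA (le_ciSup (Set.finite_range _).bddAbove)

theorem le_re_trace_smul_one (hA : A.PosSemidef) :
    A ≤ RCLike.re A.trace • (1 : Matrix n n 𝕜) := by
  refine le_smul_one_of_eigenvalues_le hA.isHermitian fun i => ?_
  rw [hA.isHermitian.trace_eq_sum_eigenvalues, ← RCLike.ofReal_sum, RCLike.ofReal_re]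
  exact Finset.single_le_sum (fun j _ => hA.eigenvalues_nonneg j) (Finset.mem_univ i)

theorem one_le_smul_of_inv_le_smul_one (hB : B.PosDef) (h : B⁻¹ ≤ c • (1 : Matrix n n 𝕜)) :
    1 ≤ c • B := by
  set S := CFC.sqrt B
  have hSS : S * S = B := CFC.sqrt_mul_sqrt_self B hB.posSemidef.nonneg
  have hS : IsSelfAdjoint S := (CFC.sqrt_nonneg B).isSelfAdjoint
  have hSu : IsUnit S.det := by
    have hdet : IsUnit (S.det * S.det) := by
      rw [← det_mul, hSS, ← isUnit_iff_isUnit_det]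
      exact hB.isUnit
    exact isUnit_of_mul_isUnit_left hdet
  calc (1 : Matrix n n 𝕜) = S * B⁻¹ * S := by
        rw [← hSS, Matrix.mul_inv_rev, mul_nonsing_inv_cancel_left _ _ hSu, nonsing_inv_mul _ hSu]
    _ ≤ S * (c • 1) * S := hS.conjugate_le_conjugate h
    _ = c • B := by rw [mul_smul_comm, mul_one, smul_mul_assoc, hSS]

theorem one_le_iSup_eigenvalues_inv_smul (hB : B.PosDef) :
    1 ≤ (⨆ i, hB.inv.isHermitian.eigenvalues i) • B :=
  one_le_smul_of_inv_le_smul_one hB (le_iSup_eigenvalues_smul_one _)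

theorem le_mul_iSup_eigenvalues_inv_smul (hB : B.PosDef) (hc : 0 ≤ c)
    (hA : A ≤ c • (1 : Matrix n n 𝕜)) :
    A ≤ (c * ⨆ i, hB.inv.isHermitian.eigenvalues i) • B := by
  rw [mul_smul]
  exact hA.trans (smul_le_smul_of_nonneg_left (one_le_iSup_eigenvalues_inv_smul hB) hc)

theorem kmax_continuity_bound_general {k k' : ℝ}
    (hB : B.PosDef) (hA : A.IsHermitian) (hD : D.PosSemidef)
    (hk : IsGreatest {r : ℝ | (B - r • A).PosSemidef} k)
    (hk' : IsGreatest {r : ℝ | (B - r • (A + D)).PosSemidef} k') :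
    0 < k' ∧ k' ≤ k ∧
      k - k' ≤ RCLike.re D.trace * (⨆ i, hB.inv.isHermitian.eigenvalues i) * k * k' := by
  have hμ : 0 ≤ ⨆ i, hB.inv.isHermitian.eigenvalues i :=
    Real.iSup_nonneg fun i => (hB.inv.eigenvalues_pos i).le
  have htr : 0 ≤ RCLike.re D.trace := (RCLike.nonneg_iff.1 hD.trace_nonneg).1
  have hAle : A ≤ max (⨆ i, hA.eigenvalues i) 0 • (1 : Matrix n n 𝕜) :=
    (le_iSup_eigenvalues_smul_one hA).trans
      (smul_le_smul_of_nonneg_right (le_max_left _ _) zero_le_one)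
  have hk₀ : 0 < k :=
    pos_of_mem_upperBounds_smul_le hB.posSemidef.nonneg (mul_nonneg (le_max_right _ _) hμ)
      (le_mul_iSup_eigenvalues_inv_smul hB (le_max_right _ _) hAle) hk.2
  exact isGreatest_smul_le_add_bounds (mul_nonneg htr hμ) hD.nonneg
    (le_mul_iSup_eigenvalues_inv_smul hB htr (le_re_trace_smul_one hD)) hk₀ hk hk'

end Loewner

/-- Quantitative continuity bound. Let `B` be positive definite, `A ≠ 0`
positive semidefinite, `ρ` a density matrix, `δ > 0`. Let `k` be the greatest element of
`{k | B - k • A is PSD}`, `k'` the greatest element of `{k | B - k • (A + δ • ρ) is PSD}`,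
and `μ` the largest eigenvalue of `B⁻¹`. Then `0 < k' ≤ k` and `k - k' ≤ δ * μ * k * k'`. -/
theorem kmax_continuity_bound {n : ℕ} (A B ρ : Matrix (Fin n) (Fin n) ℝ)
    (hB : B.PosDef) (hA : A.PosSemidef) (hA0 : A ≠ 0)
    (hρ : ρ.PosSemidef) (hρtr : ρ.trace = 1)
    (δ : ℝ) (hδ : 0 < δ) (k k' : ℝ)
    (hk : IsGreatest {k : ℝ | (B - k • A).PosSemidef} k)
    (hk' : IsGreatest {m : ℝ | (B - m • (A + δ • ρ)).PosSemidef} k')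
    (μ : ℝ) (hμ : μ = ⨆ i, hB.inv.1.eigenvalues i) :
    0 < k' ∧ k' ≤ k ∧ k - k' ≤ δ * μ * k * k' := by
  subst hμ
  simpa [hρtr] using
    kmax_continuity_bound_general hB hA.isHermitian (hρ.smul hδ.le) hk hk'
end

section
/- Let N and S be finite index types. Let n₁, n₂, n₃, n₄ be positive semidefinite real matrices indexed by N, let Z be a positive semidefinite real matrix indexed by N × S × N, and let k, l ∈ ℝ with 0 < k ≤ 1 and 0 < l ≤ 1. Suppose n₂ - k•n₁ and n₄ - l•n₃ are positive semidefinite. Let φ be a linear map from real matrices indexed by N × (N × S × N) × N to real matrices indexed by S which sends every positive semidefinite matrix to a positive semidefinite matrix. Then φ(n₂ ⊗ₖ Z ⊗ₖ n₄) - (k*l)•φ(n₁ ⊗ₖ Z ⊗ₖ n₃) is positive semidefinite; that is, the meaning of the sentence 'n₁ verb n₃' is a (k·l)-hyponym of the meaning of 'n₂ verb n₄'. -/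
open Matrix Kronecker

section Kronecker

variable {α l m n p : Type*} [NonUnitalNonAssocRing α]

theorem sub_kronecker (A₁ A₂ : Matrix l m α) (B : Matrix n p α) :
    (A₁ - A₂) ⊗ₖ B = A₁ ⊗ₖ B - A₂ ⊗ₖ B :=
  ext fun _ _ => sub_mul _ _ _

theorem kronecker_sub (A : Matrix l m α) (B₁ B₂ : Matrix n p α) :
    A ⊗ₖ (B₁ - B₂) = A ⊗ₖ B₁ - A ⊗ₖ B₂ :=
  ext fun _ _ => mul_sub _ _ _

end Kronecker

section KHyponym

open scoped ComplexOrder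

variable {𝕜 m n : Type*} [RCLike 𝕜]

/-- Graded hyponymy `X ⊑_k Y` of word meanings, i.e. `k • X ≤ Y` in the Löwner order. Any real `k`
and any square matrices are allowed, not only `k ∈ (0, 1]` and positive operators. -/
def KHyponym (k : ℝ) (X Y : Matrix n n 𝕜) : Prop :=
  (Y - k • X).PosSemidef

theorem posSemidef_kronecker_sub_kronecker [Finite m] [Finite n]
    {A B : Matrix m m 𝕜} {C D : Matrix n n 𝕜} (hA : A.PosSemidef) (hD : D.PosSemidef)
    (hAB : (B - A).PosSemidef) (hCD : (D - C).PosSemidef) :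
    (B ⊗ₖ D - A ⊗ₖ C).PosSemidef := by
  have telescope : B ⊗ₖ D - A ⊗ₖ C = (B - A) ⊗ₖ D + A ⊗ₖ (D - C) := by
    rw [sub_kronecker, kronecker_sub, sub_add_sub_cancel]
  rw [telescope]
  exact (hAB.kronecker hD).add (hA.kronecker hCD)

namespace KHyponym

variable {k l : ℝ}

theorem kronecker [Finite m] [Finite n] {X₁ Y₁ : Matrix m m 𝕜} {X₂ Y₂ : Matrix n n 𝕜}
    (hk : 0 ≤ k) (hX₁ : X₁.PosSemidef) (hY₂ : Y₂.PosSemidef)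
    (h₁ : KHyponym k X₁ Y₁) (h₂ : KHyponym l X₂ Y₂) :
    KHyponym (k * l) (X₁ ⊗ₖ X₂) (Y₁ ⊗ₖ Y₂) := by
  have smul_split : (k * l) • (X₁ ⊗ₖ X₂) = (k • X₁) ⊗ₖ (l • X₂) := by
    rw [smul_kronecker, kronecker_smul, smul_smul]
  rw [KHyponym, smul_split]
  exact posSemidef_kronecker_sub_kronecker (hX₁.smul hk) hY₂ h₁ h₂

theorem kronecker_left [Finite m] [Finite n] {X Y : Matrix n n 𝕜} {Z : Matrix m m 𝕜}
    (hZ : Z.PosSemidef) (h : KHyponym k X Y) : KHyponym k (Z ⊗ₖ X) (Z ⊗ₖ Y) := by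
  rw [KHyponym, ← kronecker_smul, ← kronecker_sub]
  exact hZ.kronecker h

theorem map {X Y : Matrix m m 𝕜} (φ : Matrix m m 𝕜 →ₗ[ℝ] Matrix n n 𝕜)
    (hφ : ∀ M : Matrix m m 𝕜, M.PosSemidef → (φ M).PosSemidef) (h : KHyponym k X Y) :
    KHyponym k (φ X) (φ Y) := by
  rw [KHyponym, ← map_smul, ← map_sub]
  exact hφ _ h

end KHyponym

theorem transitive_sentence_khyponym_general {N V O S : Type*}
    [Finite N] [Finite V] [Finite O]
    {n₁ n₂ : Matrix N N 𝕜} {n₃ n₄ : Matrix O O 𝕜} {Z : Matrix V V 𝕜} {k l : ℝ}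
    (hn₁ : n₁.PosSemidef) (hn₄ : n₄.PosSemidef) (hZ : Z.PosSemidef) (hk : 0 ≤ k)
    (h21 : KHyponym k n₁ n₂) (h43 : KHyponym l n₃ n₄)
    (φ : Matrix (N × V × O) (N × V × O) 𝕜 →ₗ[ℝ] Matrix S S 𝕜)
    (hφ : ∀ M : Matrix (N × V × O) (N × V × O) 𝕜, M.PosSemidef → (φ M).PosSemidef) :
    KHyponym (k * l) (φ (n₁ ⊗ₖ (Z ⊗ₖ n₃))) (φ (n₂ ⊗ₖ (Z ⊗ₖ n₄))) := by
  have verb_object : KHyponym l (Z ⊗ₖ n₃) (Z ⊗ₖ n₄) := h43.kronecker_left hZ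
  have sentence : KHyponym (k * l) (n₁ ⊗ₖ (Z ⊗ₖ n₃)) (n₂ ⊗ₖ (Z ⊗ₖ n₄)) :=
    h21.kronecker hk hn₁ (hZ.kronecker hn₄) verb_object
  exact sentence.map φ hφ

end KHyponym

/-- `k`-hyponymy in positive transitive sentences. If `n₁ ⊑_k n₂` and
`n₃ ⊑_l n₄` (with `0 < k ≤ 1`, `0 < l ≤ 1`) and `φ` is a positivity-preserving linear
sentence-meaning map, then `φ(n₁ ⊗ Z ⊗ n₃) ⊑_{k·l} φ(n₂ ⊗ Z ⊗ n₄)`. -/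
theorem transitive_sentence_khyponym {N S : Type*}
    [Fintype N] [DecidableEq N] [Fintype S] [DecidableEq S]
    (n₁ n₂ n₃ n₄ : Matrix N N ℝ)
    (hn₁ : n₁.PosSemidef) (hn₂ : n₂.PosSemidef) (hn₃ : n₃.PosSemidef) (hn₄ : n₄.PosSemidef)
    (Z : Matrix (N × S × N) (N × S × N) ℝ) (hZ : Z.PosSemidef)
    (k l : ℝ) (hk : 0 < k) (hk1 : k ≤ 1) (hl : 0 < l) (hl1 : l ≤ 1)
    (h21 : (n₂ - k • n₁).PosSemidef) (h43 : (n₄ - l • n₃).PosSemidef)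
    (φ : Matrix (N × (N × S × N) × N) (N × (N × S × N) × N) ℝ →ₗ[ℝ] Matrix S S ℝ)
    (hφ : ∀ M : Matrix (N × (N × S × N) × N) (N × (N × S × N) × N) ℝ,
      M.PosSemidef → (φ M).PosSemidef) :
    (φ (n₂ ⊗ₖ (Z ⊗ₖ n₄)) - (k * l) • φ (n₁ ⊗ₖ (Z ⊗ₖ n₃))).PosSemidef :=
  transitive_sentence_khyponym_general hn₁ hn₄ hZ hk.le h21 h43 φ hφ
end

section
/- Let ι be a finite index type, and for each i ∈ ι let m(i) be a finite index type. Let A, B assign to each i ∈ ι a real square matrix on m(i), and let k : ι → ℝ with k(i) ≥ 0 for all i. Suppose each A(i) is positive semidefinite and each B(i) - k(i)•A(i) is positive semidefinite. Define T(A) to be the real matrix indexed by the dependent function type Π i, m(i) with entries T(A)(x, y) = ∏_{i ∈ ι} A(i)(x(i), y(i)) (the Kronecker product of the family), and similarly T(B). Let S be a finite index type and let φ be a linear map from real matrices on Π i, m(i) to real matrices on S which sends positive semidefinite matrices to positive semidefinite matrices. Then φ(T(B)) - (∏_{i ∈ ι} k(i))•φ(T(A)) is positive semidefinite; that is, φ(T(A))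 is a (∏ᵢ kᵢ)-hyponym of φ(T(B)). -/
open Matrix

/-!
The Kronecker product of a family `A` is the Hadamard product of the pulled back matrices
`(x, y) ↦ A i (x i) (y i)`, so the Schur product theorem governs it. Since
`B ⊙ D - A ⊙ C = B ⊙ (D - C) + (B - A) ⊙ C`, Hadamard products of positive semidefinite matrices
are monotone in the Loewner order, and hence so are Kronecker products. Applied to
`0 ≤ k i • A i ≤ B i`, this gives `(∏ i, k i) • ⨂ A ≤ ⨂ B`, and a positive linear map preserves
this inequality.
-/

open scoped MatrixOrder ComplexOrder

section HadamardProd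

variable {ι m n α : Type*} [CommMonoid α]

/-- The Hadamard (entrywise) product of a finite family of matrices; the empty product is the
all-ones matrix, not the identity matrix. -/
def hadamardProd (s : Finset ι) (M : ι → Matrix m n α) : Matrix m n α :=
  of fun x y => ∏ i ∈ s, M i x y

theorem hadamardProd_empty (M : ι → Matrix m n α) : hadamardProd ∅ M = of 1 :=
  rfl

theorem hadamardProd_insert [DecidableEq ι] {s : Finset ι} {a : ι} (ha : a ∉ s)
    (M : ι → Matrix m n α) : hadamardProd (insert a s) M = M a ⊙ hadamardProd s M :=
  ext fun _ _ => Finset.prod_insert ha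

end HadamardProd

section LoewnerOrder

variable {ι m n 𝕜 : Type*} [RCLike 𝕜]

theorem of_one_nonneg : 0 ≤ (of 1 : Matrix n n 𝕜) :=
  ((PosSemidef.one (n := Unit)).submatrix fun _ => ()).nonneg

theorem submatrix_le_submatrix {A B : Matrix n n 𝕜} (hAB : A ≤ B) (e : m → n) :
    A.submatrix e e ≤ B.submatrix e e :=
  le_iff.2 ((le_iff.1 hAB).submatrix e)

theorem hadamard_nonneg {A B : Matrix n n 𝕜} (hA : 0 ≤ A) (hB : 0 ≤ B) : 0 ≤ A ⊙ B :=
  (hA.posSemidef.hadamard hB.posSemidef).nonneg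

theorem hadamard_le_hadamard {A B C D : Matrix n n 𝕜} (hAB : A ≤ B) (hCD : C ≤ D)
    (hC : 0 ≤ C) (hB : 0 ≤ B) : A ⊙ C ≤ B ⊙ D := by
  have decomposition : B ⊙ D - A ⊙ C = B ⊙ (D - C) + (B - A) ⊙ C := by
    ext x y
    simp only [Matrix.sub_apply, Matrix.add_apply, hadamard_apply]
    ring
  rw [← sub_nonneg, decomposition]
  exact add_nonneg (hadamard_nonneg hB (sub_nonneg.2 hCD)) (hadamard_nonneg (sub_nonneg.2 hAB) hC)

theorem hadamardProd_nonneg {s : Finset ι} {M : ι → Matrix n n 𝕜} (hM : ∀ i ∈ s, 0 ≤ M i) :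
    0 ≤ hadamardProd s M := by
  classical
  induction s using Finset.induction_on with
  | empty =>
    rw [hadamardProd_empty]
    exact of_one_nonneg
  | insert a s ha ih =>
    rw [Finset.forall_mem_insert] at hM
    rw [hadamardProd_insert ha]
    exact hadamard_nonneg hM.1 (ih hM.2)

theorem hadamardProd_le_hadamardProd {s : Finset ι} {M N : ι → Matrix n n 𝕜}
    (hM : ∀ i ∈ s, 0 ≤ M i) (hMN : ∀ i ∈ s, M i ≤ N i) :
    hadamardProd s M ≤ hadamardProd s N := by
  classical
  induction s using Finset.induction_on with
  | empty => rfl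
  | insert a s ha ih =>
    rw [Finset.forall_mem_insert] at hM hMN
    rw [hadamardProd_insert ha, hadamardProd_insert ha]
    exact hadamard_le_hadamard hMN.1 (ih hM.2 hMN.2) (hadamardProd_nonneg hM.2)
      (hM.1.trans hMN.1)

end LoewnerOrder

section PiKronecker

variable {ι : Type*} [Fintype ι] {m n : ι → Type*}

/-- The Kronecker product `⨂ i, A i` of a finite family of matrices, with rows and columns indexed
by dependent functions. -/
def piKronecker {α : Type*} [CommMonoid α] (A : ∀ i, Matrix (m i) (n i) α) :
    Matrix (∀ i, m i) (∀ i, n i) α :=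
  of fun x y => ∏ i, A i (x i) (y i)

theorem piKronecker_eq_hadamardProd {α : Type*} [CommMonoid α] (A : ∀ i, Matrix (m i) (n i) α) :
    piKronecker A = hadamardProd Finset.univ fun i => (A i).submatrix (· i) (· i) :=
  rfl

theorem piKronecker_smul {R α : Type*} [CommMonoid R] [CommMonoid α] [MulAction R α]
    [IsScalarTower R α α] [SMulCommClass R α α] (c : ι → R) (A : ∀ i, Matrix (m i) (n i) α) :
    piKronecker (fun i => c i • A i) = (∏ i, c i) • piKronecker A :=
  ext fun _ _ => Finset.prod_smul ..

theorem piKronecker_le_piKronecker {𝕜 : Type*} [RCLike 𝕜] {A B : ∀ i, Matrix (m i) (m i) 𝕜}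
    (hA : ∀ i, 0 ≤ A i) (hAB : ∀ i, A i ≤ B i) : piKronecker A ≤ piKronecker B := by
  rw [piKronecker_eq_hadamardProd, piKronecker_eq_hadamardProd]
  exact hadamardProd_le_hadamardProd (fun i _ => ((hA i).posSemidef.submatrix _).nonneg)
    fun i _ => submatrix_le_submatrix (hAB i) _

theorem general_sentence_khyponym_general {𝕜 : Type*} [RCLike 𝕜]
    (A B : ∀ i, Matrix (m i) (m i) 𝕜) (k : ι → ℝ) (hk : ∀ i, 0 ≤ k i)
    (hA : ∀ i, (A i).PosSemidef) (hBA : ∀ i, (B i - k i • A i).PosSemidef) {S : Type*}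
    (φ : Matrix (∀ i, m i) (∀ i, m i) 𝕜 →ₗ[ℝ] Matrix S S 𝕜)
    (hφ : ∀ M : Matrix (∀ i, m i) (∀ i, m i) 𝕜, M.PosSemidef → (φ M).PosSemidef) :
    (φ (piKronecker B) - (∏ i, k i) • φ (piKronecker A)).PosSemidef := by
  have smul_piKronecker_le : (∏ i, k i) • piKronecker A ≤ piKronecker B := by
    rw [← piKronecker_smul]
    exact piKronecker_le_piKronecker (fun i => ((hA i).smul (hk i)).nonneg)
      fun i => le_iff.2 (hBA i)
  rw [← map_smul, ← map_sub]
  exact hφ _ (le_iff.1 smul_piKronecker_le)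

end PiKronecker

/-- Generalised Sentence `k`-Hyponymy. If `A i ⊑_{k i} B i` for each word
`i` (with `A i` PSD and `k i ≥ 0`), and `φ` is a positivity-preserving linear map on the
Kronecker product space, then `φ(⊗ᵢ A i) ⊑_{∏ᵢ k i} φ(⊗ᵢ B i)`. -/
theorem general_sentence_khyponym {ι : Type*} [Fintype ι] [DecidableEq ι]
    {m : ι → Type*} [∀ i, Fintype (m i)] [∀ i, DecidableEq (m i)]
    (A B : ∀ i, Matrix (m i) (m i) ℝ) (k : ι → ℝ) (hk : ∀ i, 0 ≤ k i)
    (hA : ∀ i, (A i).PosSemidef) (hBA : ∀ i, (B i - k i • A i).PosSemidef)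
    {S : Type*} [Fintype S] [DecidableEq S]
    (φ : Matrix (∀ i, m i) (∀ i, m i) ℝ →ₗ[ℝ] Matrix S S ℝ)
    (hφ : ∀ M : Matrix (∀ i, m i) (∀ i, m i) ℝ, M.PosSemidef → (φ M).PosSemidef) :
    (φ (Matrix.of fun x y => ∏ i, B i (x i) (y i)) -
      (∏ i, k i) • φ (Matrix.of fun x y => ∏ i, A i (x i) (y i))).PosSemidef :=
  general_sentence_khyponym_general A B k hk hA hBA φ hφ
end

section
/- Let ψ and φ be orthonormal vectors in ℝ^n (so ⟨ψ,ψ⟩ = ⟨φ,φ⟩ = 1 and ⟨ψ,φ⟩ = 0), let r, s ∈ ℝ with 0 < r < 1 and 0 < s < 1, and define the density matrices ρ = r•(ψψᵀ) + (1-r)•(φφᵀ) and σ = s•(ψψᵀ) + (1-s)•(φφᵀ), where ψψᵀ denotes the outer product matrix with entries ψ(i)·ψ(j). Then the greatest element of the set {k ∈ ℝ | ρ - k•σ is positive semidefinite} equals min(r/s, (1-r)/(1-s)); in particular it is r/s if r < s and (1-r)/(1-s) otherwise. -/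
open Matrix

/-!
For an orthogonal family of nonzero vectors `v i`, each `v j` is an eigenvector of
`∑ i, a i • v i (v i)ᴴ` whose eigenvalue is a positive multiple of `a j`. Testing on the family
itself therefore detects positivity, and for `q i > 0` the matrix
`∑ i, (p i - k * q i) • v i (v i)ᴴ` is positive semidefinite exactly when `k ≤ p i / q i` for
every `i`.
-/

section Orthogonal

variable {ι m : Type*} [Fintype ι] [Fintype m]

theorem sum_smul_vecMulVec_star_mulVec {S R : Type*} [CommSemiring R] [Star R] [DistribSMul S R]
    [IsScalarTower S R R] {v : ι → m → R}
    (hv : Pairwise fun i j ↦ star (v i) ⬝ᵥ v j = 0) (a : ι → S) (j : ι) :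
    (∑ i, a i • vecMulVec (v i) (star (v i))) *ᵥ v j = (a j • (star (v j) ⬝ᵥ v j)) • v j := by
  simp only [sum_mulVec, smul_mulVec, vecMulVec_mulVec, op_smul_eq_smul, smul_assoc]
  refine Fintype.sum_eq_single j fun i hij ↦ ?_
  rw [hv hij, zero_smul, smul_zero]

theorem pairwise_star_dotProduct_pair_eq_zero {R : Type*} [NonUnitalSemiring R] [StarRing R]
    {x y : m → R} (hxy : star x ⬝ᵥ y = 0) :
    Pairwise fun i j ↦ star (![x, y] i) ⬝ᵥ ![x, y] j = 0 := by
  have hyx : star y ⬝ᵥ x = 0 := by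
    rw [star_dotProduct, hxy, star_zero]
  simp [Pairwise, Fin.forall_fin_two, hxy, hyx]

variable {𝕜 : Type*} [RCLike 𝕜] {v : ι → m → 𝕜}

open scoped ComplexOrder

theorem posSemidef_sum_smul_vecMulVec_star_iff
    (hv : Pairwise fun i j ↦ star (v i) ⬝ᵥ v j = 0) (hv₀ : ∀ i, v i ≠ 0) (a : ι → ℝ) :
    (∑ i, a i • vecMulVec (v i) (star (v i))).PosSemidef ↔ ∀ i, 0 ≤ a i := by
  refine ⟨fun h j ↦ ?_, fun ha ↦ posSemidef_sum _ fun i _ ↦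
    (posSemidef_vecMulVec_self_star (v i)).smul (ha i)⟩
  have hpos : 0 < star (v j) ⬝ᵥ v j := dotProduct_star_self_pos_iff.mpr (hv₀ j)
  have hform : 0 ≤ a j • ((star (v j) ⬝ᵥ v j) * (star (v j) ⬝ᵥ v j)) := by
    simpa only [sum_smul_vecMulVec_star_mulVec hv, dotProduct_smul, smul_eq_mul, smul_mul_assoc]
      using h.dotProduct_mulVec_nonneg (v j)
  exact nonneg_of_smul_nonneg_of_pos_right hform (mul_pos hpos hpos)

theorem posSemidef_sum_sub_smul_sum_iff
    (hv : Pairwise fun i j ↦ star (v i) ⬝ᵥ v j = 0) (hv₀ : ∀ i, v i ≠ 0)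
    (p : ι → ℝ) {q : ι → ℝ} (hq : ∀ i, 0 < q i) (k : ℝ) :
    (∑ i, p i • vecMulVec (v i) (star (v i)) -
      k • ∑ i, q i • vecMulVec (v i) (star (v i))).PosSemidef ↔ ∀ i, k ≤ p i / q i := by
  have hdiff : ∑ i, p i • vecMulVec (v i) (star (v i)) -
      k • ∑ i, q i • vecMulVec (v i) (star (v i)) =
        ∑ i, (p i - k * q i) • vecMulVec (v i) (star (v i)) := by
    simp only [Finset.smul_sum, smul_smul, sub_smul, Finset.sum_sub_distrib]
  rw [hdiff, posSemidef_sum_smul_vecMulVec_star_iff hv hv₀]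
  exact forall_congr' fun i ↦ by rw [sub_nonneg, le_div_iff₀ (hq i)]

theorem two_state_entailment_strength_general [Nonempty ι]
    (hv : Pairwise fun i j ↦ star (v i) ⬝ᵥ v j = 0) (hv₀ : ∀ i, v i ≠ 0)
    (p : ι → ℝ) {q : ι → ℝ} (hq : ∀ i, 0 < q i) :
    IsGreatest
      {k : ℝ | (∑ i, p i • vecMulVec (v i) (star (v i)) -
        k • ∑ i, q i • vecMulVec (v i) (star (v i))).PosSemidef}
      (Finset.univ.inf' Finset.univ_nonempty fun i ↦ p i / q i) := by
  simp only [posSemidef_sum_sub_smul_sum_iff hv hv₀ p hq]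
  exact ⟨fun i ↦ Finset.inf'_le _ (Finset.mem_univ i), fun k hk ↦ Finset.le_inf' _ _ fun i _ ↦ hk i⟩

end Orthogonal

/-- For orthonormal `ψ, φ ∈ ℝ^n` and `0 < r < 1`, `0 < s < 1`, with
`ρ = r • ψψᵀ + (1-r) • φφᵀ` and `σ = s • ψψᵀ + (1-s) • φφᵀ`, the greatest element of
`{k | ρ - k • σ is PSD}` is `min (r/s) ((1-r)/(1-s))`: it is `r/s` if `r < s` and
`(1-r)/(1-s)` otherwise. -/
theorem two_state_entailment_strength {n : ℕ} (ψ φ : Fin n → ℝ)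
    (hψ : ψ ⬝ᵥ ψ = 1) (hφ : φ ⬝ᵥ φ = 1) (hψφ : ψ ⬝ᵥ φ = 0)
    (r s : ℝ) (hr0 : 0 < r) (hr1 : r < 1) (hs0 : 0 < s) (hs1 : s < 1) :
    IsGreatest
      {k : ℝ | ((r • vecMulVec ψ ψ + (1 - r) • vecMulVec φ φ) -
        k • (s • vecMulVec ψ ψ + (1 - s) • vecMulVec φ φ)).PosSemidef}
      (min (r / s) ((1 - r) / (1 - s))) := by
  have hne {x : Fin n → ℝ} (hx : x ⬝ᵥ x = 1) : x ≠ 0 := by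
    rintro rfl
    simp at hx
  simpa [Fin.univ_succ] using two_state_entailment_strength_general
    (pairwise_star_dotProduct_pair_eq_zero hψφ) (Fin.forall_fin_two.mpr ⟨hne hψ, hne hφ⟩)
    ![r, 1 - r] (q := ![s, 1 - s]) (Fin.forall_fin_two.mpr ⟨hs0, sub_pos.mpr hs1⟩)
end
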